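/- Suppose each Ω_i is nonempty and α ∈ [0,1] is such that for every i = 0, …, r−1 and all distinct colours c, q ∈ Fin k: |{σ ∈ Ω_i(c,c) : u_i ∈ Q^i_{c,q}(σ)}| ≤ α·|Ω_i(c,c)| and |{σ ∈ Ω_i(q,c) : u_i ∈ Q^i_{q,c}(σ)}| ≤ α·|Ω_i(q,c)|. Let μ be the uniform distribution over Ω_r and let μ' be the distribution of Y_r produced by the random colouring algorithm. Then ‖μ − μ'‖ ≤ r·α. -/

import Mathlib

/-- The disagreement graph `Q_{σ(v),q}` in `G`: the set of vertices `x` for which there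
is a path `v = w₀, …, w_t = x` in `G` all of whose vertices receive colour `σ v` or `q`. -/
def disagreeSet {V : Type*} {k : ℕ} (G : SimpleGraph V) (v : V)
    (σ : V → Fin k) (q : Fin k) : Set V :=
  {x | ∃ p : G.Walk v x, ∀ w ∈ p.support, σ w = σ v ∨ σ w = q}

open Classical in
/-- The `q`-switching `H(σ,q)`: exchange the colours `σ v` and `q` on the disagreement
graph, leaving all other vertices unchanged. -/
noncomputable def switchColour {V : Type*} {k : ℕ} (G : SimpleGraph V) (v : V)
    (σ : V → Fin k) (q : Fin k) : V → Fin k := fun x =>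
  if x ∈ disagreeSet G v σ q then
    if σ x = σ v then q else if σ x = q then σ v else σ x
  else σ x

/-- The set of proper `k`-colourings of `G`, as a finset. -/
noncomputable def colourings {V : Type*} [Fintype V] (G : SimpleGraph V) (k : ℕ) :
    Finset (V → Fin k) :=
  (Set.toFinite {σ : V → Fin k | ∀ x y, G.Adj x y → σ x ≠ σ y}).toFinset

/-- The randomized procedure STEP for graph `G` and vertices `v u`: on a colouring with
`σ v ≠ σ u` output it unchanged; otherwise pick `q` uniformly at random from
`Fin k \ {σ v}` and output `H(σ,q)`. -/
noncomputable def stepPMF {V : Type*} {k : ℕ} (hk : 2 ≤ k) (G : SimpleGraph V)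
    (v u : V) (σ : V → Fin k) : PMF (V → Fin k) :=
  if σ v = σ u then
    PMF.map (fun q => switchColour G v σ q)
      (PMF.uniformOfFinset (Finset.univ.erase (σ v))
        (by
          rw [← Finset.card_pos, Finset.card_erase_of_mem (Finset.mem_univ _),
            Finset.card_univ, Fintype.card_fin]
          omega))
  else PMF.pure σ

/-- The random colouring algorithm: `Y 0` is the given initial random colouring and
`Y (i+1)` is the output of STEP for `G i, v i, u i` on input `Y i`. -/
noncomputable def algPMF {V : Type*} [Fintype V] {k : ℕ} (hk : 2 ≤ k)
    (G : ℕ → SimpleGraph V) (v u : ℕ → V) (Y0 : PMF (V → Fin k)) :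
    ℕ → PMF (V → Fin k)
  | 0 => Y0
  | i + 1 => (algPMF hk G v u Y0 i).bind (stepPMF hk (G i) (v i) (u i))

/-!
It suffices to bound the error of one step by `α`: the errors add up by the triangle inequality,
since a Markov kernel does not increase total variation distance.

For one step let `Ω' ⊆ Ω` be the colourings after and before the edge `vu` is added. STEP fixes
`Ω'` and redistributes the colourings in `Ω \ Ω'`, those with `σ v = σ u`. For colours `c ≠ q`,
switching is a bijection from the `σ ∈ Ω(c, c)` with `u ∉ Q_{c,q}` onto the `σ ∈ Ω(q, c)` with
`u ∉ Q_{q,c}`. Hence each of these colourings in `Ω'` receives an extra mass of at least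
`1 / ((k - 1) |Ω|)`. Summing over all pairs `c ≠ q`, there are at least `(1 - α) |Ω'|` of them and
at least `(1 - α) (k - 1) |Ω \ Ω'|`, so the output overlaps the uniform distribution on `Ω'` in
mass at least `1 - α`.
-/

lemma sum_offDiag_snd {ι M : Type*} [AddCommMonoid M] (s : Finset ι) (f : ι → M) :
    ∑ x ∈ s.offDiag, f x.2 = (s.card - 1) • ∑ i ∈ s, f i := by
  classical
  have hmem : ∀ x : ι × ι, x ∈ s.offDiag ↔ x.2 ∈ s ∧ x.1 ∈ s.erase x.2 := fun x => by
    rw [Finset.mem_offDiag, Finset.mem_erase]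
    tauto
  calc ∑ x ∈ s.offDiag, f x.2 = ∑ i ∈ s, ∑ _j ∈ s.erase i, f i :=
        Finset.sum_finset_product_right s.offDiag s s.erase hmem
    _ = (s.card - 1) • ∑ i ∈ s, f i := by
        rw [Finset.smul_sum]
        exact Finset.sum_congr rfl fun i hi => by
          rw [Finset.sum_const, Finset.card_erase_of_mem hi]

section TotalVariation

variable {S : Type*} [Fintype S]

lemma sum_toReal_pmf (p : PMF S) : ∑ a, (p a).toReal = 1 := by
  rw [← ENNReal.toReal_sum fun a _ => p.apply_ne_top a, ← tsum_fintype (L := .unconditional S),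
    p.tsum_coe, ENNReal.toReal_one]

/-- The total variation distance of two distributions on a finite set, encoded as half of their
`ℓ¹` distance. -/
noncomputable def tvDist (p q : PMF S) : ℝ :=
  (∑ a, |(p a).toReal - (q a).toReal|) / 2

@[simp]
lemma tvDist_self (p : PMF S) : tvDist p p = 0 := by
  simp [tvDist]

lemma tvDist_comm (p q : PMF S) : tvDist p q = tvDist q p := by
  simp only [tvDist, abs_sub_comm]

lemma tvDist_triangle (p q s : PMF S) : tvDist p s ≤ tvDist p q + tvDist q s := by
  rw [tvDist, tvDist, tvDist, ← add_div, ← Finset.sum_add_distrib]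
  gcongr
  exact abs_sub_le _ _ _

lemma tvDist_eq_one_sub_sum_min (p q : PMF S) :
    tvDist p q = 1 - ∑ a, min (p a).toReal (q a).toReal := by
  have habs : ∀ a, |(p a).toReal - (q a).toReal| =
      (p a).toReal + (q a).toReal - 2 * min (p a).toReal (q a).toReal := fun a => by
    linarith [max_sub_min_eq_abs' (p a).toReal (q a).toReal,
      max_add_min (p a).toReal (q a).toReal]
  simp only [tvDist, habs, Finset.sum_sub_distrib, Finset.sum_add_distrib, ← Finset.mul_sum,
    sum_toReal_pmf]
  ring

lemma tvDist_le_one_sub_sum {p q : PMF S} (T : Finset S) {m : S → ℝ}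
    (hp : ∀ a ∈ T, m a ≤ (p a).toReal) (hq : ∀ a ∈ T, m a ≤ (q a).toReal) :
    tvDist p q ≤ 1 - ∑ a ∈ T, m a := by
  rw [tvDist_eq_one_sub_sum_min]
  gcongr
  calc ∑ a ∈ T, m a ≤ ∑ a ∈ T, min (p a).toReal (q a).toReal :=
        Finset.sum_le_sum fun a ha => le_min (hp a ha) (hq a ha)
    _ ≤ ∑ a, min (p a).toReal (q a).toReal :=
        Finset.sum_le_univ_sum_of_nonneg fun _ =>
          le_min ENNReal.toReal_nonneg ENNReal.toReal_nonneg

lemma sum_sub_sum_le_tvDist (p q : PMF S) (A : Finset S) :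
    ∑ a ∈ A, (p a).toReal - ∑ a ∈ A, (q a).toReal ≤ tvDist p q := by
  calc ∑ a ∈ A, (p a).toReal - ∑ a ∈ A, (q a).toReal
      ≤ ∑ a ∈ A, ((p a).toReal - min (p a).toReal (q a).toReal) := by
        rw [← Finset.sum_sub_distrib]
        gcongr
        exact min_le_right _ _
    _ ≤ ∑ a, ((p a).toReal - min (p a).toReal (q a).toReal) :=
        Finset.sum_le_univ_sum_of_nonneg fun _ => sub_nonneg.2 (min_le_left _ _)
    _ = tvDist p q := by
        rw [Finset.sum_sub_distrib, sum_toReal_pmf, tvDist_eq_one_sub_sum_min]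

lemma abs_sum_sub_sum_le_tvDist (p q : PMF S) (A : Finset S) :
    |∑ a ∈ A, (p a).toReal - ∑ a ∈ A, (q a).toReal| ≤ tvDist p q :=
  abs_sub_le_iff.2 ⟨sum_sub_sum_le_tvDist p q A, tvDist_comm p q ▸ sum_sub_sum_le_tvDist q p A⟩

lemma toReal_bind_apply {T : Type*} (p : PMF S) (K : S → PMF T) (b : T) :
    (p.bind K b).toReal = ∑ a, (p a).toReal * (K a b).toReal := by
  rw [PMF.bind_apply, tsum_fintype, ENNReal.toReal_sum fun a _ =>
    ENNReal.mul_ne_top (p.apply_ne_top a) ((K a).apply_ne_top b)]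
  simp only [ENNReal.toReal_mul]

lemma tvDist_bind_le {T : Type*} [Fintype T] (p q : PMF S) (K : S → PMF T) :
    tvDist (p.bind K) (q.bind K) ≤ tvDist p q := by
  unfold tvDist
  gcongr
  calc ∑ b, |(p.bind K b).toReal - (q.bind K b).toReal|
      = ∑ b, |∑ a, ((p a).toReal - (q a).toReal) * (K a b).toReal| := by
        simp only [toReal_bind_apply, ← Finset.sum_sub_distrib, sub_mul]
    _ ≤ ∑ b, ∑ a, |(p a).toReal - (q a).toReal| * (K a b).toReal := by
        gcongr with b
        refine (Finset.abs_sum_le_sum_abs _ _).trans_eq ?_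
        simp only [abs_mul, abs_of_nonneg ENNReal.toReal_nonneg]
    _ = ∑ a, |(p a).toReal - (q a).toReal| := by
        rw [Finset.sum_comm]
        simp only [← Finset.mul_sum, sum_toReal_pmf, mul_one]

lemma tvDist_bind_le_add {T : Type*} [Fintype T] (t : PMF T) (p q : PMF S) (K : S → PMF T) :
    tvDist t (q.bind K) ≤ tvDist t (p.bind K) + tvDist p q :=
  (tvDist_triangle _ (p.bind K) _).trans (by gcongr; exact tvDist_bind_le p q K)

end TotalVariation

section Uniform

variable {S : Type*}

lemma toReal_uniformOfFinset_apply_of_mem {s : Finset S} (hs : s.Nonempty) {a : S} (ha : a ∈ s) :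
    (PMF.uniformOfFinset s hs a).toReal = (s.card : ℝ)⁻¹ := by
  simp [PMF.uniformOfFinset_apply_of_mem hs ha]

lemma toReal_uniformOfFinset_bind_apply {T : Type*} {s : Finset S} (hs : s.Nonempty)
    (K : S → PMF T) (b : T) :
    ((PMF.uniformOfFinset s hs).bind K b).toReal = (∑ a ∈ s, (K a b).toReal) / s.card := by
  rw [PMF.bind_apply, tsum_eq_sum (s := s) fun a ha => by
      rw [PMF.uniformOfFinset_apply_of_notMem hs ha, zero_mul],
    ENNReal.toReal_sum fun a _ => ENNReal.mul_ne_top (PMF.apply_ne_top _ a) ((K a).apply_ne_top b),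
    Finset.sum_div]
  refine Finset.sum_congr rfl fun a ha => ?_
  rw [ENNReal.toReal_mul, toReal_uniformOfFinset_apply_of_mem hs ha, inv_mul_eq_div]

lemma natCast_card_eq_add_card_sdiff [DecidableEq S] {Y Z : Finset S} (hZY : Z ⊆ Y) :
    (Y.card : ℝ) = Z.card + (Y \ Z).card := by
  rw [← Nat.cast_add, add_comm, Finset.card_sdiff_add_card_eq_card hZY]

lemma one_add_ite_div_card_le_uniformOfFinset [DecidableEq S] {Y Z W : Finset S}
    (hZ : Z.Nonempty) (hZY : Z ⊆ Y) {e : ℝ} (he : e ≤ (Y \ Z).card / Z.card) {b : S}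
    (hb : b ∈ Z) :
    (1 + if b ∈ W then e else 0) / Y.card ≤ (PMF.uniformOfFinset Z hZ b).toReal := by
  calc (1 + if b ∈ W then e else 0) / (Y.card : ℝ)
      ≤ (1 + (Y \ Z).card / Z.card) / Y.card := by
        gcongr
        split_ifs
        exacts [he, by positivity]
    _ = (PMF.uniformOfFinset Z hZ b).toReal := by
        rw [toReal_uniformOfFinset_apply_of_mem hZ hb, natCast_card_eq_add_card_sdiff hZY]
        field_simp

lemma one_add_ite_div_card_le_uniformOfFinset_bind [DecidableEq S] {Y Z W : Finset S}
    (hY : Y.Nonempty) (hZY : Z ⊆ Y) {K : S → PMF S} {e : ℝ}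
    (hKW : ∀ b ∈ W, ∃ a ∈ Y \ Z, e ≤ (K a b).toReal) {b : S} (hb : b ∈ Z)
    (hKb : K b = PMF.pure b) :
    (1 + if b ∈ W then e else 0) / Y.card ≤ ((PMF.uniformOfFinset Y hY).bind K b).toReal := by
  rw [toReal_uniformOfFinset_bind_apply, ← Finset.sum_sdiff hZY, add_comm]
  gcongr
  · split_ifs with hbW
    · obtain ⟨a, ha, hab⟩ := hKW b hbW
      exact hab.trans (Finset.single_le_sum (f := fun x => (K x b).toReal)
        (fun _ _ => ENNReal.toReal_nonneg) ha)
    · exact Finset.sum_nonneg fun _ _ => ENNReal.toReal_nonneg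
  · calc (1 : ℝ) = (K b b).toReal := by simp [hKb]
      _ ≤ ∑ a ∈ Z, (K a b).toReal :=
          Finset.single_le_sum (f := fun x => (K x b).toReal)
            (fun _ _ => ENNReal.toReal_nonneg) hb

lemma mul_le_mul_min_inv_div {ε w n d m : ℝ} (hn : 0 < n) (hd : 0 ≤ d) (hm : 0 < m)
    (hwm : ε * m ≤ w) (hwn : ε * (n * d) ≤ w) : ε * d ≤ w * min n⁻¹ (d / m) := by
  rcases min_choice n⁻¹ (d / m) with h | h <;> rw [h]
  · rwa [← div_eq_mul_inv, le_div_iff₀ hn, mul_assoc, mul_comm d]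
  · calc ε * d = ε * m * (d / m) := by field_simp
      _ ≤ w * (d / m) := by gcongr

/- Both distributions give every point of `Z` mass at least `1 / #Y`, and every point of `W` an
extra mass of at least `min (1 / n) (#(Y \ Z) / #Z) / #Y`. -/
theorem tvDist_uniformOfFinset_bind_le [Fintype S] [DecidableEq S] {Y Z W : Finset S}
    (hY : Y.Nonempty) (hZ : Z.Nonempty) (hZY : Z ⊆ Y) (hWZ : W ⊆ Z) {K : S → PMF S}
    (hK : ∀ b ∈ Z, K b = PMF.pure b) {n : ℝ} (hn : 0 < n)
    (hKW : ∀ b ∈ W, ∃ a ∈ Y \ Z, n⁻¹ ≤ (K a b).toReal) {α : ℝ}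
    (hZW : (1 - α) * Z.card ≤ W.card) (hYW : (1 - α) * (n * (Y \ Z).card) ≤ W.card) :
    tvDist (PMF.uniformOfFinset Z hZ) ((PMF.uniformOfFinset Y hY).bind K) ≤
      α * ((Y \ Z).card / Y.card) := by
  have hZpos : (0 : ℝ) < Z.card := by exact_mod_cast hZ.card_pos
  have hYpos : (0 : ℝ) < Y.card := by exact_mod_cast hY.card_pos
  set e : ℝ := min n⁻¹ ((Y \ Z).card / Z.card)
  have hKe : ∀ b ∈ W, ∃ a ∈ Y \ Z, e ≤ (K a b).toReal := fun b hb =>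
    (hKW b hb).imp fun _ => And.imp_right (min_le_left _ _).trans
  have hWe : (1 - α) * (Y \ Z).card ≤ W.card * e :=
    mul_le_mul_min_inv_div hn (Nat.cast_nonneg _) hZpos hZW hYW
  calc tvDist (PMF.uniformOfFinset Z hZ) ((PMF.uniformOfFinset Y hY).bind K)
      ≤ 1 - ∑ b ∈ Z, (1 + if b ∈ W then e else 0) / (Y.card : ℝ) :=
        tvDist_le_one_sub_sum Z
          (fun _ hb => one_add_ite_div_card_le_uniformOfFinset hZ hZY (min_le_right _ _) hb)
          (fun b hb => one_add_ite_div_card_le_uniformOfFinset_bind hY hZY hKe hb (hK b hb))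
    _ = 1 - (Z.card + W.card * e) / Y.card := by
        rw [← Finset.sum_div, Finset.sum_add_distrib, Finset.sum_ite_mem,
          Finset.inter_eq_right.2 hWZ]
        simp
    _ ≤ 1 - (Z.card + (1 - α) * (Y \ Z).card) / Y.card := by gcongr
    _ = α * ((Y \ Z).card / Y.card) := by
        rw [natCast_card_eq_add_card_sdiff hZY] at hYpos ⊢
        field_simp
        ring

end Uniform

section Switching

variable {V : Type*} {k : ℕ} {G : SimpleGraph V} {v : V} {σ : V → Fin k} {q : Fin k}

lemma self_mem_disagreeSet : v ∈ disagreeSet G v σ q :=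
  ⟨.nil, by simp⟩

lemma eq_or_eq_of_mem_disagreeSet {x : V} (hx : x ∈ disagreeSet G v σ q) :
    σ x = σ v ∨ σ x = q := by
  obtain ⟨p, hp⟩ := hx
  exact hp x p.end_mem_support

lemma mem_disagreeSet_of_adj {x y : V} (hx : x ∈ disagreeSet G v σ q) (hxy : G.Adj x y)
    (hy : σ y = σ v ∨ σ y = q) : y ∈ disagreeSet G v σ q := by
  obtain ⟨p, hp⟩ := hx
  refine ⟨p.concat hxy, fun w hw => ?_⟩
  rw [SimpleGraph.Walk.support_concat, List.mem_append, List.mem_singleton] at hw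
  rcases hw with hw | rfl
  exacts [hp w hw, hy]

lemma switchColour_of_mem {x : V} (hx : x ∈ disagreeSet G v σ q) :
    switchColour G v σ q x = Equiv.swap (σ v) q (σ x) := by
  rw [switchColour, if_pos hx, Equiv.swap_apply_def]

lemma switchColour_of_notMem {x : V} (hx : x ∉ disagreeSet G v σ q) :
    switchColour G v σ q x = σ x :=
  if_neg hx

@[simp]
lemma switchColour_self : switchColour G v σ q v = q := by
  rw [switchColour_of_mem self_mem_disagreeSet, Equiv.swap_apply_left]

lemma switchColour_eq_or_eq_iff (x : V) :
    (switchColour G v σ q x = q ∨ switchColour G v σ q x = σ v) ↔ (σ x = σ v ∨ σ x = q) := by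
  by_cases hx : x ∈ disagreeSet G v σ q
  · simp only [switchColour_of_mem hx, Equiv.swap_apply_eq_iff, Equiv.swap_apply_left,
      Equiv.swap_apply_right]
  · rw [switchColour_of_notMem hx, or_comm]

@[simp]
lemma disagreeSet_switchColour :
    disagreeSet G v (switchColour G v σ q) (σ v) = disagreeSet G v σ q := by
  simp only [disagreeSet, switchColour_self, switchColour_eq_or_eq_iff]

@[simp]
lemma switchColour_switchColour : switchColour G v (switchColour G v σ q) (σ v) = σ := by
  funext x
  by_cases hx : x ∈ disagreeSet G v σ q
  · rw [switchColour_of_mem (by rwa [disagreeSet_switchColour]), switchColour_self,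
      switchColour_of_mem hx, Equiv.swap_comm, Equiv.swap_apply_self]
  · rw [switchColour_of_notMem (by rwa [disagreeSet_switchColour]), switchColour_of_notMem hx]

lemma switchColour_ne_of_mem_of_notMem {x y : V} (hx : x ∈ disagreeSet G v σ q)
    (hy : y ∉ disagreeSet G v σ q) (hxy : G.Adj x y) :
    switchColour G v σ q x ≠ switchColour G v σ q y := by
  intro heq
  have hcol := (switchColour_eq_or_eq_iff (G := G) x).2 (eq_or_eq_of_mem_disagreeSet hx)
  rw [heq, switchColour_eq_or_eq_iff] at hcol
  exact hy (mem_disagreeSet_of_adj hx hxy hcol)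

lemma switchColour_ne_of_adj (hσ : ∀ x y, G.Adj x y → σ x ≠ σ y) (x y : V) (hxy : G.Adj x y) :
    switchColour G v σ q x ≠ switchColour G v σ q y := by
  by_cases hx : x ∈ disagreeSet G v σ q <;> by_cases hy : y ∈ disagreeSet G v σ q
  · rw [switchColour_of_mem hx, switchColour_of_mem hy]
    exact (Equiv.swap (σ v) q).injective.ne (hσ x y hxy)
  · exact switchColour_ne_of_mem_of_notMem hx hy hxy
  · exact (switchColour_ne_of_mem_of_notMem hy hx hxy.symm).symm
  · rw [switchColour_of_notMem hx, switchColour_of_notMem hy]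
    exact hσ x y hxy

end Switching

section Colourings

variable {V : Type*} [Fintype V] {k : ℕ} {G : SimpleGraph V} {v u : V} {σ : V → Fin k}
  {c d q : Fin k}

@[simp]
lemma mem_colourings : σ ∈ colourings G k ↔ ∀ x y, G.Adj x y → σ x ≠ σ y := by
  simp [colourings]

lemma mem_colourings_sup_edge (hvu : v ≠ u) :
    σ ∈ colourings (G ⊔ SimpleGraph.edge v u) k ↔
      σ ∈ colourings G k ∧ σ v ≠ σ u := by
  simp only [mem_colourings, SimpleGraph.sup_adj, SimpleGraph.edge_adj]
  constructor
  · exact fun h => ⟨fun x y hxy => h x y (.inl hxy), h v u (.inr ⟨.inl ⟨rfl, rfl⟩, hvu⟩)⟩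
  · rintro ⟨hG, hσ⟩ x y (hxy | ⟨⟨rfl, rfl⟩ | ⟨rfl, rfl⟩, -⟩)
    exacts [hG x y hxy, hσ, hσ.symm]

/-- The set `Ω(c, d)` of proper colourings of `G` giving `v` the colour `c` and `u` the
colour `d`. -/
noncomputable def pinnedColourings (G : SimpleGraph V) (v u : V) (c d : Fin k) :
    Finset (V → Fin k) :=
  {σ ∈ colourings G k | σ v = c ∧ σ u = d}

open Classical in
/-- The colourings in `Ω(c, d)` for which `u` lies outside the disagreement graph `Q_{c,q}`, so
that the `q`-switching leaves the colour of `u` alone. -/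
noncomputable def detachedColourings (G : SimpleGraph V) (v u : V) (c d q : Fin k) :
    Finset (V → Fin k) :=
  {σ ∈ pinnedColourings G v u c d | u ∉ disagreeSet G v σ q}

lemma mem_pinnedColourings :
    σ ∈ pinnedColourings G v u c d ↔ σ ∈ colourings G k ∧ σ v = c ∧ σ u = d := by
  simp [pinnedColourings]

lemma mem_detachedColourings :
    σ ∈ detachedColourings G v u c d q ↔
      σ ∈ pinnedColourings G v u c d ∧ u ∉ disagreeSet G v σ q := by
  simp [detachedColourings]

lemma switchColour_mem_detachedColourings (hσ : σ ∈ detachedColourings G v u c d q) :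
    switchColour G v σ q ∈ detachedColourings G v u q d c := by
  obtain ⟨hpin, hu⟩ := mem_detachedColourings.1 hσ
  obtain ⟨hG, rfl, hd⟩ := mem_pinnedColourings.1 hpin
  refine mem_detachedColourings.2 ⟨mem_pinnedColourings.2 ⟨?_, switchColour_self, ?_⟩, ?_⟩
  · exact mem_colourings.2 (switchColour_ne_of_adj (mem_colourings.1 hG))
  · rw [switchColour_of_notMem hu, hd]
  · rwa [disagreeSet_switchColour]

lemma switchColour_switchColour_of_mem_detachedColourings
    (hσ : σ ∈ detachedColourings G v u c d q) :
    switchColour G v (switchColour G v σ q) c = σ := by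
  obtain ⟨-, rfl, -⟩ := mem_pinnedColourings.1 (mem_detachedColourings.1 hσ).1
  exact switchColour_switchColour

lemma card_detachedColourings_comm (G : SimpleGraph V) (v u : V) (c d q : Fin k) :
    (detachedColourings G v u c d q).card = (detachedColourings G v u q d c).card :=
  Finset.card_nbij' (switchColour G v · q) (switchColour G v · c)
    (fun _ => switchColour_mem_detachedColourings) (fun _ => switchColour_mem_detachedColourings)
    (fun _ => switchColour_switchColour_of_mem_detachedColourings)
    (fun _ => switchColour_switchColour_of_mem_detachedColourings)

lemma one_sub_mul_card_le_card_detachedColourings {α : ℝ}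
    (h : (({σ : V → Fin k | (∀ x y, G.Adj x y → σ x ≠ σ y) ∧ σ v = c ∧ σ u = d ∧
        u ∈ disagreeSet G v σ q}).ncard : ℝ) ≤
      α * ({σ : V → Fin k | (∀ x y, G.Adj x y → σ x ≠ σ y) ∧ σ v = c ∧ σ u = d}).ncard) :
    (1 - α) * (pinnedColourings G v u c d).card ≤ (detachedColourings G v u c d q).card := by
  classical
  have hpin : {σ : V → Fin k | (∀ x y, G.Adj x y → σ x ≠ σ y) ∧ σ v = c ∧ σ u = d} =
      pinnedColourings G v u c d := by
    ext σ
    simp [mem_pinnedColourings]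
  have hatt : {σ : V → Fin k | (∀ x y, G.Adj x y → σ x ≠ σ y) ∧ σ v = c ∧ σ u = d ∧
      u ∈ disagreeSet G v σ q} =
        ({σ ∈ pinnedColourings G v u c d | u ∈ disagreeSet G v σ q} : Finset _) := by
    ext σ
    simp [mem_pinnedColourings, and_assoc]
  rw [hpin, hatt, Set.ncard_coe_finset, Set.ncard_coe_finset] at h
  have hsplit : (({σ ∈ pinnedColourings G v u c d | u ∈ disagreeSet G v σ q} : Finset _).card +
      (detachedColourings G v u c d q).card : ℝ) = (pinnedColourings G v u c d).card := by
    rw [detachedColourings]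
    exact_mod_cast Finset.card_filter_add_card_filter_not _
  linarith

open Classical in
/-- The proper colourings `σ` of `G` with `σ v ≠ σ u` for which `u` lies outside the disagreement
graph `Q_{σ(v),σ(u)}`: those that arise by switching a colouring in which `v` and `u` share a
colour without changing the colour of `u`. -/
noncomputable def reversibleColourings (G : SimpleGraph V) (v u : V) (k : ℕ) :
    Finset (V → Fin k) :=
  {σ ∈ colourings G k | σ v ≠ σ u ∧ u ∉ disagreeSet G v σ (σ u)}

lemma mem_reversibleColourings :
    σ ∈ reversibleColourings G v u k ↔
      σ ∈ colourings G k ∧ σ v ≠ σ u ∧ u ∉ disagreeSet G v σ (σ u) := by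
  simp [reversibleColourings]

lemma card_reversibleColourings (G : SimpleGraph V) (v u : V) (k : ℕ) :
    (reversibleColourings G v u k).card =
      ∑ x ∈ (Finset.univ : Finset (Fin k)).offDiag,
        (detachedColourings G v u x.1 x.2 x.2).card := by
  rw [Finset.card_eq_sum_card_fiberwise (f := fun σ => (σ v, σ u)) fun σ hσ => by
    exact Finset.mem_offDiag.2 ⟨Finset.mem_univ _, Finset.mem_univ _,
      (mem_reversibleColourings.1 hσ).2.1⟩]
  refine Finset.sum_congr rfl fun x hx => congrArg Finset.card ?_
  ext σ
  simp only [Finset.mem_filter, mem_reversibleColourings, mem_detachedColourings,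
    mem_pinnedColourings, Prod.ext_iff]
  grind

lemma card_colourings_sup_edge (G : SimpleGraph V) (hvu : v ≠ u) (k : ℕ) :
    (colourings (G ⊔ SimpleGraph.edge v u) k).card =
      ∑ x ∈ (Finset.univ : Finset (Fin k)).offDiag, (pinnedColourings G v u x.1 x.2).card := by
  rw [Finset.card_eq_sum_card_fiberwise (f := fun σ => (σ v, σ u)) fun σ hσ => by
    exact Finset.mem_offDiag.2 ⟨Finset.mem_univ _, Finset.mem_univ _,
      ((mem_colourings_sup_edge hvu).1 hσ).2⟩]
  refine Finset.sum_congr rfl fun x hx => congrArg Finset.card ?_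
  ext σ
  simp only [Finset.mem_filter, mem_colourings_sup_edge hvu, mem_pinnedColourings,
    Prod.ext_iff]
  grind

open Classical in
lemma card_colourings_sdiff_sup_edge (G : SimpleGraph V) (hvu : v ≠ u) (k : ℕ) :
    (colourings G k \ colourings (G ⊔ SimpleGraph.edge v u) k).card =
      ∑ c : Fin k, (pinnedColourings G v u c c).card := by
  rw [Finset.card_eq_sum_card_fiberwise (f := fun σ => σ v) fun σ _ => Finset.mem_univ (σ v)]
  refine Finset.sum_congr rfl fun c _ => congrArg Finset.card ?_
  ext σ
  simp only [Finset.mem_filter, Finset.mem_sdiff, mem_colourings_sup_edge hvu,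
    mem_pinnedColourings]
  grind

end Colourings

section Step

variable {V : Type*} {k : ℕ} {G : SimpleGraph V} {v u : V} {σ : V → Fin k}

lemma stepPMF_of_ne (hk : 2 ≤ k) (hσ : σ v ≠ σ u) : stepPMF hk G v u σ = PMF.pure σ :=
  if_neg hσ

lemma inv_le_toReal_stepPMF_switchColour (hk : 2 ≤ k) (hσ : σ v = σ u) {q : Fin k}
    (hq : q ≠ σ v) :
    ((k - 1 : ℕ) : ℝ)⁻¹ ≤ (stepPMF hk G v u σ (switchColour G v σ q)).toReal := by
  have hmass : ((k - 1 : ℕ) : ENNReal)⁻¹ ≤ stepPMF hk G v u σ (switchColour G v σ q) := by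
    rw [stepPMF, if_pos hσ, PMF.map_apply]
    refine le_trans ?_ (ENNReal.le_tsum q)
    simp [hq, Finset.card_erase_of_mem]
  rw [← ENNReal.toReal_natCast, ← ENNReal.toReal_inv]
  exact ENNReal.toReal_mono (PMF.apply_ne_top _ _) hmass

open Classical in
lemma exists_inv_le_toReal_stepPMF [Fintype V] (hk : 2 ≤ k) (hvu : v ≠ u)
    (hσ : σ ∈ reversibleColourings G v u k) :
    ∃ τ ∈ colourings G k \ colourings (G ⊔ SimpleGraph.edge v u) k,
      ((k - 1 : ℕ) : ℝ)⁻¹ ≤ (stepPMF hk G v u τ σ).toReal := by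
  obtain ⟨hG, hne, hu⟩ := mem_reversibleColourings.1 hσ
  have heq : switchColour G v σ (σ u) v = switchColour G v σ (σ u) u := by
    rw [switchColour_self, switchColour_of_notMem hu]
  refine ⟨switchColour G v σ (σ u), ?_, ?_⟩
  · rw [Finset.mem_sdiff, mem_colourings_sup_edge hvu]
    exact ⟨mem_colourings.2 (switchColour_ne_of_adj (mem_colourings.1 hG)), fun h => h.2 heq⟩
  · have hstep := inv_le_toReal_stepPMF_switchColour (G := G) hk heq (q := σ v)
      (by rwa [switchColour_self])
    rwa [switchColour_switchColour] at hstep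

/-- The isolation condition of one step of the algorithm, in complementary form: for distinct
colours `c`, `q`, all but an `α` fraction of `Ω(c, c)` and of `Ω(q, c)` leaves `u` outside the
disagreement graph `Q_{c,q}`. -/
def IsIsolating [Fintype V] (G : SimpleGraph V) (v u : V) (k : ℕ) (α : ℝ) : Prop :=
  ∀ c q : Fin k, c ≠ q →
    (1 - α) * (pinnedColourings G v u c c).card ≤ (detachedColourings G v u c c q).card ∧
    (1 - α) * (pinnedColourings G v u q c).card ≤ (detachedColourings G v u q c c).card

variable [Fintype V] {α : ℝ}

lemma IsIsolating.mul_card_colourings_sup_le (h : IsIsolating G v u k α) (hvu : v ≠ u) :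
    (1 - α) * (colourings (G ⊔ SimpleGraph.edge v u) k).card ≤
      (reversibleColourings G v u k).card := by
  rw [card_colourings_sup_edge G hvu, card_reversibleColourings]
  push_cast
  rw [Finset.mul_sum]
  exact Finset.sum_le_sum fun x hx => (h x.2 x.1 (Finset.mem_offDiag.1 hx).2.2.symm).2

open Classical in
lemma IsIsolating.mul_card_colourings_sdiff_le (h : IsIsolating G v u k α) (hvu : v ≠ u) :
    (1 - α) * ((k - 1 : ℕ) *
        (colourings G k \ colourings (G ⊔ SimpleGraph.edge v u) k).card) ≤
      (reversibleColourings G v u k).card := by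
  have hpairs := sum_offDiag_snd Finset.univ fun c : Fin k => (pinnedColourings G v u c c).card
  rw [Finset.card_univ, Fintype.card_fin, smul_eq_mul] at hpairs
  rw [card_colourings_sdiff_sup_edge G hvu, ← Nat.cast_mul, ← hpairs,
    card_reversibleColourings]
  push_cast
  rw [Finset.mul_sum]
  refine Finset.sum_le_sum fun x hx => ?_
  rw [← card_detachedColourings_comm]
  exact (h x.2 x.1 (Finset.mem_offDiag.1 hx).2.2.symm).1

open Classical in
theorem IsIsolating.tvDist_uniformOfFinset_bind_stepPMF_le (h : IsIsolating G v u k α)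
    (hα : 0 ≤ α) (hk : 2 ≤ k) (hvu : v ≠ u) (hne : (colourings G k).Nonempty)
    (hne' : (colourings (G ⊔ SimpleGraph.edge v u) k).Nonempty) :
    tvDist (PMF.uniformOfFinset _ hne')
      ((PMF.uniformOfFinset _ hne).bind (stepPMF hk G v u)) ≤ α := by
  have hsub : colourings (G ⊔ SimpleGraph.edge v u) k ⊆ colourings G k :=
    fun σ hσ => ((mem_colourings_sup_edge hvu).1 hσ).1
  have hrev : reversibleColourings G v u k ⊆
      colourings (G ⊔ SimpleGraph.edge v u) k := fun σ hσ => by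
    obtain ⟨hG, hσ, -⟩ := mem_reversibleColourings.1 hσ
    exact (mem_colourings_sup_edge hvu).2 ⟨hG, hσ⟩
  refine (tvDist_uniformOfFinset_bind_le hne hne' hsub hrev
    (fun σ hσ => stepPMF_of_ne hk ((mem_colourings_sup_edge hvu).1 hσ).2)
    (n := (k - 1 : ℕ)) (by exact_mod_cast Nat.sub_pos_of_lt hk)
    (fun σ hσ => exists_inv_le_toReal_stepPMF hk hvu hσ)
    (h.mul_card_colourings_sup_le hvu) (h.mul_card_colourings_sdiff_le hvu)).trans ?_
  refine mul_le_of_le_one_right hα (div_le_one_of_le₀ ?_ (Nat.cast_nonneg _))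
  exact_mod_cast Finset.card_le_card Finset.sdiff_subset

end Step

/-- if each `G i` is obtained from `G (i+1)` by deleting the edge
`{v i, u i}`, each `Ω i` is nonempty, and for every `i < r` and all distinct colours
`c q` at most an `α` fraction of `Ω_i(c,c)` has `u i ∈ Q^i_{c,q}` and at most an `α`
fraction of `Ω_i(q,c)` has `u i ∈ Q^i_{q,c}`, then the output distribution `μ'` of the
random colouring algorithm is within total variation distance `r·α` of the uniform
distribution `μ` on `Ω r`. -/
theorem stmt7 {V : Type*} [Fintype V] {k : ℕ} (hk : 2 ≤ k) (r : ℕ)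
    (G : ℕ → SimpleGraph V) (v u : ℕ → V)
    (hdel : ∀ i < r, v i ≠ u i ∧ ¬ (G i).Adj (v i) (u i) ∧
      G (i + 1) = G i ⊔ SimpleGraph.fromEdgeSet {s(v i, u i)})
    (hne : ∀ i ≤ r, (colourings (G i) k).Nonempty)
    (α : ℝ) (hα₀ : 0 ≤ α) (hα₁ : α ≤ 1)
    (hiso : ∀ i < r, ∀ c q : Fin k, c ≠ q →
      ((({σ : V → Fin k | (∀ x y, (G i).Adj x y → σ x ≠ σ y) ∧ σ (v i) = c ∧
            σ (u i) = c ∧ u i ∈ disagreeSet (G i) (v i) σ q}).ncard : ℝ) ≤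
        α * (({σ : V → Fin k | (∀ x y, (G i).Adj x y → σ x ≠ σ y) ∧ σ (v i) = c ∧
            σ (u i) = c}).ncard : ℝ)) ∧
      ((({σ : V → Fin k | (∀ x y, (G i).Adj x y → σ x ≠ σ y) ∧ σ (v i) = q ∧
            σ (u i) = c ∧ u i ∈ disagreeSet (G i) (v i) σ c}).ncard : ℝ) ≤
        α * (({σ : V → Fin k | (∀ x y, (G i).Adj x y → σ x ≠ σ y) ∧ σ (v i) = q ∧
            σ (u i) = c}).ncard : ℝ))) :
    ∀ A : Finset (V → Fin k),
      |(∑ a ∈ A, ((PMF.uniformOfFinset (colourings (G r) k) (hne r le_rfl)) a).toReal) -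
        (∑ a ∈ A, ((algPMF hk G v u
          (PMF.uniformOfFinset (colourings (G 0) k) (hne 0 (Nat.zero_le r))) r) a).toReal)|
      ≤ (r : ℝ) * α := by
  classical
  intro A
  refine (abs_sum_sub_sum_le_tvDist _ _ A).trans ?_
  induction r with
  | zero => simp only [algPMF, tvDist_self, Nat.cast_zero, zero_mul, le_refl]
  | succ r ih =>
    obtain ⟨hvu, -, hG⟩ := hdel r r.lt_succ_self
    change _ = G r ⊔ SimpleGraph.edge (v r) (u r) at hG
    have hstep : IsIsolating (G r) (v r) (u r) k α := fun c q hcq =>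
      (hiso r r.lt_succ_self c q hcq).imp one_sub_mul_card_le_card_detachedColourings
        one_sub_mul_card_le_card_detachedColourings
    have hprev := ih (fun i hi => hdel i (hi.trans r.lt_succ_self))
      (fun i hi => hne i (hi.trans r.le_succ))
      (fun i hi => hiso i (hi.trans r.lt_succ_self))
    refine (tvDist_bind_le_add _ (PMF.uniformOfFinset _ (hne r r.le_succ)) _ _).trans ?_
    simp only [hG]
    push_cast
    linarith [hstep.tvDist_uniformOfFinset_bind_stepPMF_le hα₀ hk hvu (hne r r.le_succ)
      (hG ▸ hne (r + 1) le_rfl)]
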